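/- Let R be a ring, n a positive integer, and A a matrix in M_n(R). Then A is a sum of commutators of elements of M_n(R) if and only if the trace of A is a sum of commutators of elements of R. -/

import Mathlib

/-- `a` is a (finite) sum of additive commutators `x*y - y*x` of elements of the ring. -/
def IsSumOfCommutators {A : Type*} [Ring A] (a : A) : Prop :=
  ∃ (n : ℕ) (x y : Fin n → A), a = ∑ i, (x i * y i - y i * x i)

theorem isc_zero {A : Type*} [Ring A] : IsSumOfCommutators (0 : A) :=
  ⟨0, fun _ => 0, fun _ => 0, by simp⟩

theorem isc_comm {A : Type*} [Ring A] (x y : A) : IsSumOfCommutators (x * y - y * x) :=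
  ⟨1, fun _ => x, fun _ => y, by simp⟩

theorem isc_add {A : Type*} [Ring A] {a b : A} (ha : IsSumOfCommutators a)
    (hb : IsSumOfCommutators b) : IsSumOfCommutators (a + b) := by
  obtain ⟨n, x, y, rfl⟩ := ha
  obtain ⟨m, z, w, rfl⟩ := hb
  exact ⟨n + m, Fin.append x z, Fin.append y w, by simp only [Fin.sum_univ_add, Fin.append_left, Fin.append_right]⟩

theorem isc_sum {A ι : Type*} [Ring A] (s : Finset ι) (f : ι → A)
    (h : ∀ i ∈ s, IsSumOfCommutators (f i)) : IsSumOfCommutators (∑ i ∈ s, f i) :=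
  Finset.sum_induction f IsSumOfCommutators (fun _ _ => isc_add) isc_zero h

/-- An `n×n` matrix `A` over a ring `R` is a sum of commutators in `Mₙ(R)` if and only if
its trace is a sum of commutators in `R`. -/
theorem stmt_13 {R : Type*} [Ring R] (n : ℕ) (hn : 0 < n)
    (A : Matrix (Fin n) (Fin n) R) :
    IsSumOfCommutators A ↔ IsSumOfCommutators (Matrix.trace A) := by
  constructor
  · rintro ⟨m, x, y, rfl⟩
    rw [Matrix.trace_sum]
    refine isc_sum _ _ fun k _ => ?_
    have : Matrix.trace (x k * y k - y k * x k)
        = ∑ i, ∑ j, (x k i j * y k j i - y k j i * x k i j) := by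
      rw [Matrix.trace_sub]
      simp only [Matrix.trace, Matrix.diag, Matrix.mul_apply, Finset.sum_sub_distrib]
      congr 1
      exact Finset.sum_comm
    rw [this]
    exact isc_sum _ _ fun i _ => isc_sum _ _ fun j _ => isc_comm _ _
  · intro h
    let o : Fin n := ⟨0, hn⟩
    have h1 : IsSumOfCommutators (Matrix.single o o (Matrix.trace A)) := by
      obtain ⟨m, x, y, hxy⟩ := h
      refine ⟨m, fun k => Matrix.single o o (x k), fun k => Matrix.single o o (y k), ?_⟩
      rw [hxy]
      have h4 := map_sum (Matrix.singleAddMonoidHom (α := R) o o)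
        (fun k => x k * y k - y k * x k) Finset.univ
      simp only [map_sub] at h4
      simpa using h4
    have h2 : A = (∑ i, ∑ j, (Matrix.single i j (A i j)
        - if i = j then Matrix.single o o (A i j) else 0))
        + Matrix.single o o (Matrix.trace A) := by
      have h3 : Matrix.single o o (Matrix.trace A) = ∑ i, Matrix.single o o (A i i) :=
        map_sum (Matrix.singleAddMonoidHom o o) _ _
      simp only [Finset.sum_sub_distrib, Finset.sum_ite_eq, Finset.mem_univ, if_true, h3,
        sub_add_cancel]
      exact Matrix.matrix_eq_sum_single A
    rw [h2]
    refine isc_add (isc_sum _ _ fun i _ => isc_sum _ _ fun j _ => ?_) h1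
    by_cases hij : i = j
    · subst hij
      have := isc_comm (Matrix.single i o (A i i)) (Matrix.single o i (1 : R))
      simpa using this
    · have := isc_comm (Matrix.single i j (A i j)) (Matrix.single j j (1 : R))
      rw [Matrix.single_mul_single_of_ne (h := fun h => hij h.symm)] at this
      simpa [hij] using this
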